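/- A map 𝔬 : 𝕆 → 𝕆 is an order-reversing homeomorphism of the lexicographically ordered square if and only if there exist an order-reversing homeomorphism θ : I → I and a family (μ_s)_{s ∈ I} of order-reversing homeomorphisms μ_s : I → I such that 𝔬(s,t) = (θ(s), μ_s(t)) for all (s,t) ∈ I × I. -/

import Mathlib

open Set

/-- The unit interval `[0,1]`. -/
local notation "𝕀" => unitInterval

/-- The lexicographic order on `[0,1] × [0,1]`:
`(x,y) ≤ (s,t)` iff `x < s`, or `x = s` and `y ≤ t`. -/
def lexLE (p q : 𝕀 × 𝕀) : Prop := p.1 < q.1 ∨ (p.1 = q.1 ∧ p.2 ≤ q.2)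

/-- The strict lexicographic order on `[0,1] × [0,1]`. -/
def lexLT (p q : 𝕀 × 𝕀) : Prop := p.1 < q.1 ∨ (p.1 = q.1 ∧ p.2 < q.2)

/-- The order topology of the lexicographic order on `[0,1] × [0,1]`, generated by the
open rays. -/
def lexTop : TopologicalSpace (𝕀 × 𝕀) :=
  TopologicalSpace.generateFrom
    ({S | ∃ a, S = {x | lexLT a x}} ∪ {S | ∃ a, S = {x | lexLT x a}})

lemma lexLT_trichotomy' (p q : 𝕀 × 𝕀) : lexLT p q ∨ p = q ∨ lexLT q p := by
  unfold lexLT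
  rcases lt_trichotomy p.1 q.1 with h | h | h
  · exact Or.inl (Or.inl h)
  · rcases lt_trichotomy p.2 q.2 with h' | h' | h'
    · exact Or.inl (Or.inr ⟨h, h'⟩)
    · exact Or.inr (Or.inl (Prod.ext h h'))
    · exact Or.inr (Or.inr (Or.inr ⟨h.symm, h'⟩))
  · exact Or.inr (Or.inr (Or.inl h))

lemma lexLT_iff_le_ne (p q : 𝕀 × 𝕀) : lexLT p q ↔ lexLE p q ∧ p ≠ q := by
  unfold lexLT lexLE
  rw [Ne, Prod.ext_iff]
  constructor
  · rintro (h | ⟨h, h'⟩)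
    · exact ⟨Or.inl h, fun e => h.ne e.1⟩
    · exact ⟨Or.inr ⟨h, h'.le⟩, fun e => h'.ne e.2⟩
  · rintro ⟨h | ⟨h, h'⟩, hn⟩
    · exact Or.inl h
    · exact Or.inr ⟨h, lt_of_le_of_ne h' fun e => hn ⟨h, e⟩⟩

lemma lexLT_asymm' (p q : 𝕀 × 𝕀) (h : lexLT p q) (h' : lexLT q p) : False := by
  rcases h with h | ⟨h, h2⟩ <;> rcases h' with h' | ⟨h', h2'⟩
  · exact lt_asymm h h'
  · exact h.ne h'.symm
  · exact h'.ne h.symm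
  · exact lt_asymm h2 h2'

lemma lex_fiber (e : 𝕀 × 𝕀 ≃ 𝕀 × 𝕀) (he : ∀ x y, lexLT x y ↔ lexLT (e y) (e x))
    (p q : 𝕀 × 𝕀) (hpq : p.1 = q.1) : (e p).1 = (e q).1 := by
  have key : ∀ p q : 𝕀 × 𝕀, p.1 = q.1 → lexLT p q → (e p).1 = (e q).1 := by
    intro p q hpq hlt
    rcases (he p q).1 hlt with h | h
    swap
    · exact h.1.symm
    exfalso
    obtain ⟨D, hDc, hD⟩ := TopologicalSpace.exists_countable_dense 𝕀
    have hsub : Ioo (e q).1 (e p).1 ⊆ (fun d => (e (p.1, d)).1) '' D := by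
      intro u hu
      obtain ⟨b, hb⟩ := e.surjective (u, 0)
      obtain ⟨a, ha⟩ := e.surjective (u, 1)
      have hab : lexLT a b := (he a b).2 (by rw [ha, hb]; exact Or.inr ⟨rfl, zero_lt_one⟩)
      have hpa : lexLT p a := (he p a).2 (by rw [ha]; exact Or.inl hu.2)
      have hbq : lexLT b q := (he b q).2 (by rw [hb]; exact Or.inl hu.1)
      have h1 : p.1 ≤ a.1 := by rcases hpa with h | h; exacts [h.le, h.1.le]
      have h2 : a.1 ≤ b.1 := by rcases hab with h | h; exacts [h.le, h.1.le]
      have h3 : b.1 ≤ q.1 := by rcases hbq with h | h; exacts [h.le, h.1.le]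
      have h4 : a.1 = p.1 := le_antisymm ((h2.trans h3).trans hpq.ge) h1
      have h5 : b.1 = p.1 := le_antisymm (h3.trans hpq.ge) (h1.trans h2)
      have h6 : a.2 < b.2 := by
        rcases hab with h | h
        · exact absurd (h4.trans h5.symm) h.ne
        · exact h.2
      obtain ⟨d, hd, hd1, hd2⟩ := hD.exists_between h6
      refine ⟨d, hd, ?_⟩
      have g1 : lexLT (e (p.1, d)) (u, 1) := by
        rw [← ha]; exact (he _ _).1 (Or.inr ⟨h4, hd1⟩)
      have g2 : lexLT (u, 0) (e (p.1, d)) := by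
        rw [← hb]; exact (he _ _).1 (Or.inr ⟨h5.symm, hd2⟩)
      apply le_antisymm
      · rcases g1 with h | h; exacts [h.le, h.1.le]
      · rcases g2 with h | h; exacts [h.le, h.1.le]
    have hc : (Ioo (e q).1 (e p).1).Countable := (hDc.image _).mono hsub
    have hc' : (Ioo ((e q).1 : ℝ) ((e p).1 : ℝ)).Countable := by
      refine (hc.image Subtype.val).mono ?_
      intro x hx
      exact ⟨⟨x, (e q).1.2.1.trans hx.1.le, hx.2.le.trans (e p).1.2.2⟩, ⟨hx.1, hx.2⟩, rfl⟩
    have hlt' : ((e q).1 : ℝ) < ((e p).1 : ℝ) := h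
    exact (Cardinal.Real.Ioo_countable_iff.1 hc').not_gt hlt'
  rcases lexLT_trichotomy' p q with h | h | h
  · exact key p q hpq h
  · rw [h]
  · exact (key q p hpq.symm h).symm

lemma lex_symm (e : 𝕀 × 𝕀 ≃ 𝕀 × 𝕀) (he : ∀ x y, lexLT x y ↔ lexLT (e y) (e x)) :
    ∀ x y, lexLT x y ↔ lexLT (e.symm y) (e.symm x) := by
  intro x y
  rw [he (e.symm y) (e.symm x), e.apply_symm_apply, e.apply_symm_apply]

lemma lex_continuous (e : 𝕀 × 𝕀 ≃ 𝕀 × 𝕀) (he : ∀ x y, lexLT x y ↔ lexLT (e y) (e x)) :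
    @Continuous _ _ lexTop lexTop e := by
  refine (@continuous_generateFrom_iff _ _ e lexTop _).2 ?_
  rintro S (⟨a, rfl⟩ | ⟨a, rfl⟩)
  · obtain ⟨b, rfl⟩ := e.surjective a
    refine TopologicalSpace.isOpen_generateFrom_of_mem (Or.inr ⟨b, ?_⟩)
    ext x
    exact (he x b).symm
  · obtain ⟨b, rfl⟩ := e.surjective a
    refine TopologicalSpace.isOpen_generateFrom_of_mem (Or.inl ⟨b, ?_⟩)
    ext x
    exact (he b x).symm

lemma exists_homeo_of_strictAnti (g : 𝕀 → 𝕀) (hg : StrictAnti g) (hs : Function.Surjective g) :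
    ∃ h : 𝕀 ≃ₜ 𝕀, ⇑h = g := by
  have hm : StrictMono (OrderDual.toDual ∘ g) := fun a b hab => hg hab
  have hs' : Function.Surjective (OrderDual.toDual ∘ g) := hs
  let h : 𝕀 ≃ₜ 𝕀ᵒᵈ := (hm.orderIsoOfSurjective _ hs').toHomeomorph
  exact ⟨h, rfl⟩

/-- `f` is an order-reversing self-homeomorphism of the lexicographically ordered
square iff there are an order-reversing homeomorphism `θ` of `[0,1]` (with its
Euclidean topology) and a family `μ` of order-reversing homeomorphisms of `[0,1]`
with `f (s,t) = (θ s, μ s t)`. -/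
theorem lex_square_orderReversing_homeomorph_iff (f : 𝕀 × 𝕀 → 𝕀 × 𝕀) :
    ((∃ 𝔬 : @Homeomorph (𝕀 × 𝕀) (𝕀 × 𝕀) lexTop lexTop, ⇑𝔬 = f) ∧
      ∀ x y, lexLE x y → lexLE (f y) (f x)) ↔
    (∃ (θ : 𝕀 ≃ₜ 𝕀) (μ : 𝕀 → 𝕀 ≃ₜ 𝕀), Antitone ⇑θ ∧ (∀ s : 𝕀, Antitone ⇑(μ s)) ∧
      ∀ s t : 𝕀, f (s, t) = (θ s, μ s t)) := by
  constructor
  · rintro ⟨⟨o, rfl⟩, hle⟩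
    let e : 𝕀 × 𝕀 ≃ 𝕀 × 𝕀 := @Homeomorph.toEquiv _ _ lexTop lexTop o
    have hle' : ∀ x y, lexLE x y → lexLE (e y) (e x) := hle
    have h1 : ∀ x y, lexLT x y → lexLT (e y) (e x) := by
      intro x y h
      rw [lexLT_iff_le_ne] at h ⊢
      exact ⟨hle' x y h.1, fun h' => h.2 (e.injective h').symm⟩
    have he : ∀ x y, lexLT x y ↔ lexLT (e y) (e x) := by
      intro x y
      refine ⟨h1 x y, fun h => ?_⟩
      rcases lexLT_trichotomy' x y with h' | h' | h'
      · exact h'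
      · rw [h'] at h; exact (lexLT_asymm' _ _ h h).elim
      · exact (lexLT_asymm' _ _ h (h1 _ _ h')).elim
    have hf : ∀ p q : 𝕀 × 𝕀, p.1 = q.1 ↔ (e p).1 = (e q).1 := by
      intro p q
      refine ⟨lex_fiber e he p q, fun h => ?_⟩
      simpa using lex_fiber e.symm (lex_symm e he) _ _ h
    obtain ⟨θ, hθ⟩ := exists_homeo_of_strictAnti (fun s => (e (s, 0)).1) (by
      intro s s' h
      rcases (he (s, 0) (s', 0)).1 (Or.inl h) with h' | h'
      · exact h'
      · exact absurd ((hf (s', 0) (s, 0)).2 h'.1) h.ne') (by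
      intro u
      obtain ⟨⟨s, t⟩, h⟩ := e.surjective (u, 0)
      refine ⟨s, ?_⟩
      have := (hf (s, 0) (s, t)).1 rfl
      rw [h] at this
      exact this)
    have hμ : ∀ s, StrictAnti (fun t => (e (s, t)).2) := by
      intro s t t' h
      rcases (he (s, t) (s, t')).1 (Or.inr ⟨rfl, h⟩) with h' | h'
      · exact absurd ((hf (s, t') (s, t)).1 rfl) h'.ne
      · exact h'.2
    have hμs : ∀ s, Function.Surjective (fun t => (e (s, t)).2) := by
      intro s u
      obtain ⟨⟨s', t⟩, h⟩ := e.surjective ((e (s, 0)).1, u)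
      have h2 : s' = s := (hf (s', t) (s, 0)).2 (by rw [h])
      subst h2
      exact ⟨t, by simp only [h]⟩
    choose μ hμe using fun s => exists_homeo_of_strictAnti _ (hμ s) (hμs s)
    refine ⟨θ, μ, ?_, ?_, ?_⟩
    · rw [hθ]
      intro s s' h
      rcases h.eq_or_lt with rfl | h
      · exact le_rfl
      rcases (he (s, 0) (s', 0)).1 (Or.inl h) with h' | h'
      · exact h'.le
      · exact h'.1.le
    · intro s
      rw [hμe]
      exact (hμ s).antitone
    · intro s t
      rw [hθ, hμe]
      exact Prod.ext ((hf (s, t) (s, 0)).1 rfl) rfl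
  · rintro ⟨θ, μ, hθ, hμ, hf⟩
    have hθs : StrictAnti θ := hθ.strictAnti_of_injective θ.injective
    have hμs : ∀ s, StrictAnti (μ s) := fun s => (hμ s).strictAnti_of_injective (μ s).injective
    have hinj : Function.Injective f := by
      rintro ⟨s, t⟩ ⟨s', t'⟩ h
      rw [hf, hf, Prod.mk.injEq] at h
      obtain ⟨h1, h2⟩ := h
      obtain rfl := θ.injective h1
      obtain rfl := (μ s).injective h2
      rfl
    have hsurj : Function.Surjective f := by
      rintro ⟨u, v⟩
      refine ⟨(θ.symm u, (μ (θ.symm u)).symm v), ?_⟩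
      rw [hf]; simp
    have h1 : ∀ x y, lexLT x y → lexLT (f y) (f x) := by
      rintro ⟨s, t⟩ ⟨s', t'⟩ h
      rw [hf, hf]
      rcases h with h | ⟨h, h'⟩
      · exact Or.inl (hθs h)
      · simp only at h h'
        subst h
        exact Or.inr ⟨rfl, hμs _ h'⟩
    let e : 𝕀 × 𝕀 ≃ 𝕀 × 𝕀 := Equiv.ofBijective f ⟨hinj, hsurj⟩
    have he : ∀ x y, lexLT x y ↔ lexLT (e y) (e x) := by
      intro x y
      refine ⟨h1 x y, fun h => ?_⟩
      rcases lexLT_trichotomy' x y with h' | h' | h'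
      · exact h'
      · rw [h'] at h; exact (lexLT_asymm' _ _ h h).elim
      · exact (lexLT_asymm' _ _ h (h1 _ _ h')).elim
    refine ⟨⟨@Homeomorph.mk _ _ lexTop lexTop e (lex_continuous e he)
      (lex_continuous e.symm (lex_symm e he)), rfl⟩, ?_⟩
    intro x y h
    by_cases hxy : x = y
    · subst hxy; exact Or.inr ⟨rfl, le_rfl⟩
    · exact ((lexLT_iff_le_ne _ _).1 (h1 x y ((lexLT_iff_le_ne _ _).2 ⟨h, hxy⟩))).1
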